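/- arXiv:2405.14575 — 3 statements merged into one kernel-verified Lean document; each statement's English description precedes it below -/
import Mathlib

section
/- For every number of agents n ≥ 2, every set of m chores M = {1,…,m}, every additive cost functions c_1,…,c_n on M, and every responsibilities b_1,…,b_n with 0 < b_i < 1 and ∑_{i=1}^n b_i = 1, there exists an assignment (S_1,…,S_n) of all chores such that c_i(S_i) ≤ 2·MMS(c_i, b̌_i) for every agent i. In other words, the share 2·MMS-bar, defined by (c,b) ↦ 2·MMS(c, b̌), is feasible ex-post for additive cost functions over chores and arbitrary responsibilities. -/
/-!
The assignment comes from a picking sequence. Positions `0, …, m - 1` are given owners such that, for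
every `p`, agent `i` owns at most `1 + p * b i` of the positions `0, …, p`; since `∑ i, b i = 1`, a
greedy choice achieves this (`exists_owner_seq`). The agents then pick in the order of positions
`m - 1, …, 0`, the owner of each position taking its cheapest remaining chore. At position `t`,
`t + 1` chores remain, so the pick costs at most the entry `d t` of the owner's decreasingly sorted
list of costs (`exists_picking`, `exists_sorted_costs`).

By Abel summation (`sum_mul_nonpos_of_partial_sums`), the total cost to agent `i` is at most
`d 0 + b * (d 1 + ⋯ + d (m - 1)) = (1 - b) * d 0 + b * c(M)`, where `b = b i`. With `k = ⌈1 / b⌉` and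
`μ = MMS(c, 1/k)`, one has `d 0 ≤ μ` and `c(M) ≤ k * μ`, so the cost is at most
`(1 + b * (k - 1)) * μ ≤ 2 * μ`, as `k < 1 / b + 1`.
-/

open Finset

noncomputable section

/-- Cost of a bundle under an additive cost function. -/
def bundleVal {m : ℕ} (c : Fin m → ℝ) (S : Finset (Fin m)) : ℝ := ∑ j ∈ S, c j

/-- A tuple of bundles partitions the items: pairwise disjoint and covering all items. -/
def IsPartition {n m : ℕ} (A : Fin n → Finset (Fin m)) : Prop :=
  (∀ i j : Fin n, i ≠ j → Disjoint (A i) (A j)) ∧ ∀ e : Fin m, ∃ i, e ∈ A i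

/-- Maximin share `MMS(c, 1/k)` for an additive cost function over chores:
the minimum over partitions into `k` bundles of the maximum bundle cost. -/
def MMSc {m : ℕ} (c : Fin m → ℝ) (k : ℕ) : ℝ :=
  ⨅ P : {P : Fin k → Finset (Fin m) // IsPartition P}, ⨆ j : Fin k, bundleVal c (P.1 j)

/-- A fair sequence of owners of the positions `0, 1, 2, …`: among the positions `0, …, p`, agent `i`
owns at most `1 + p * b i`. At position `p` some agent owns at most `p * b i` of the earlier
positions, because both sides sum to `p` over the agents; that agent is given position `p`. -/
lemma exists_owner_seq {n : ℕ} (b : Fin n → ℝ) (hb : ∀ i, 0 < b i) (hsum : ∑ i, b i = 1) (m : ℕ) :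
    ∃ s : ℕ → Fin n, ∀ p < m, ∀ i,
      ∑ q ∈ range (p + 1), (if s q = i then (1 : ℝ) else 0) ≤ 1 + p * b i := by
  have hne : Nonempty (Fin n) := by
    by_contra h
    rw [not_nonempty_iff] at h
    simp at hsum
  induction m with
  | zero => exact ⟨fun _ => Classical.arbitrary _, by simp⟩
  | succ m ih =>
    obtain ⟨s, hs⟩ := ih
    have htot : ∑ i, ∑ q ∈ range m, (if s q = i then (1 : ℝ) else 0) ≤ ∑ i, (m : ℝ) * b i := by
      rw [Finset.sum_comm, ← Finset.mul_sum, hsum]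
      simp
    obtain ⟨i₀, -, hi₀⟩ := Finset.exists_le_of_sum_le Finset.univ_nonempty htot
    have hcongr : ∀ p ≤ m, ∀ i, ∑ q ∈ range p, (if Function.update s m i₀ q = i then (1 : ℝ) else 0)
        = ∑ q ∈ range p, (if s q = i then (1 : ℝ) else 0) := by
      intro p hp i
      refine Finset.sum_congr rfl fun q hq => ?_
      have : q < p := Finset.mem_range.1 hq
      rw [Function.update_of_ne (by omega)]
    refine ⟨Function.update s m i₀, fun p hp i => ?_⟩
    rcases Nat.lt_succ_iff_lt_or_eq.1 hp with h | rfl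
    · rw [hcongr _ (by omega)]
      exact hs p h i
    · rw [Finset.sum_range_succ, hcongr _ le_rfl, Function.update_self]
      by_cases h : i₀ = i
      · subst h
        simp only [if_true]
        linarith
      · rw [if_neg h, add_zero]
        rcases p with _ | p
        · simp
        · refine (hs p (by omega) i).trans ?_
          have := hb i
          push_cast
          nlinarith

/-- Abel summation: weights with nonpositive partial sums pair nonpositively with a nonnegative
antitone sequence. -/
lemma sum_mul_nonpos_of_partial_sums {d w : ℕ → ℝ} (hd : Antitone d) (hd0 : ∀ p, 0 ≤ d p) (m : ℕ)
    (hw : ∀ p ≤ m, ∑ q ∈ range p, w q ≤ 0) : ∑ q ∈ range m, w q * d q ≤ 0 := by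
  have key : ∀ p ≤ m, ∑ q ∈ range p, w q * d q ≤ (∑ q ∈ range p, w q) * d p := by
    intro p
    induction p with
    | zero => simp
    | succ p ih =>
      intro hp
      have h1 := ih (by omega)
      have h2 := hw (p + 1) hp
      have h3 := hd (Nat.le_succ p)
      rw [Finset.sum_range_succ] at h2 ⊢
      rw [Finset.sum_range_succ]
      simp only [Nat.succ_eq_add_one] at h3
      nlinarith
  exact (key m le_rfl).trans (mul_nonpos_of_nonpos_of_nonneg (hw m le_rfl) (hd0 m))

/-- The costs listed in decreasing order (positions counted from `0`, padded with `0` beyond the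
last chore), together with the pigeonhole fact that the cheapest chore of a set of size `t + 1`
costs at most the entry at position `t`. -/
lemma exists_sorted_costs {m : ℕ} (c : Fin m → ℝ) (hc : ∀ j, 0 ≤ c j) :
    ∃ d : ℕ → ℝ, Antitone d ∧ (∀ p, 0 ≤ d p) ∧ ∑ p ∈ range m, d p = ∑ j, c j ∧
      (∀ v, 0 ≤ v → (∀ j, c j ≤ v) → d 0 ≤ v) ∧
      ∀ (t : ℕ) (R : Finset (Fin m)), #R = t + 1 → ∃ e ∈ R, c e ≤ d t := by
  set σ : Equiv.Perm (Fin m) := Tuple.sort (fun j => - c j) with hσ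
  have hanti : ∀ p q : Fin m, p ≤ q → c (σ q) ≤ c (σ p) := by
    intro p q hpq
    have := Tuple.monotone_sort (fun j => - c j) hpq
    simpa using this
  refine ⟨fun p => if h : p < m then c (σ ⟨p, h⟩) else 0, ?_, ?_, ?_, ?_, ?_⟩
  · intro p q hpq
    dsimp only
    split_ifs with h1 h2 h2
    · exact hanti _ _ hpq
    · omega
    · exact hc _
    · exact le_rfl
  · intro p
    dsimp only
    split_ifs
    · exact hc _
    · exact le_rfl
  · rw [Finset.sum_range]
    simp [Equiv.sum_comp σ c]
  · intro v hv h
    dsimp only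
    split_ifs
    · exact h _
    · exact hv
  · intro t R hR
    by_contra! hcon
    have htm : t < m := by
      have := Finset.card_le_univ R
      simp at this
      omega
    -- Every chore of `R` would sit at one of the first `t` positions.
    have hmaps : R.map σ.symm.toEmbedding ⊆ Finset.Iio (⟨t, htm⟩ : Fin m) := by
      intro p hp
      obtain ⟨e, he, rfl⟩ := Finset.mem_map.1 hp
      rw [Finset.mem_Iio]
      by_contra hle
      have h1 := hanti _ _ (not_lt.1 hle)
      have h2 := hcon e he
      simp only [htm, dif_pos] at h2
      simp at h1
      linarith
    have := Finset.card_le_card hmaps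
    simp at this
    omega

/-- The picking sequence: while `t + 1` chores remain, the owner `s t` of position `t` takes its
cheapest remaining chore, which costs at most `d (s t) t`. -/
lemma exists_picking {n m : ℕ} (c : Fin n → Fin m → ℝ) (d : Fin n → ℕ → ℝ) (s : ℕ → Fin n)
    (hd : ∀ i (t : ℕ) (R : Finset (Fin m)), #R = t + 1 → ∃ e ∈ R, c i e ≤ d i t)
    (t : ℕ) (R : Finset (Fin m)) (hR : #R = t) :
    ∃ f : Fin m → Fin n, ∀ i, ∑ e ∈ R, (if f e = i then c i e else 0)
      ≤ ∑ q ∈ range t, (if s q = i then (1 : ℝ) else 0) * d i q := by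
  induction t generalizing R with
  | zero =>
    rw [Finset.card_eq_zero] at hR
    subst hR
    exact ⟨fun _ => s 0, by simp⟩
  | succ t ih =>
    obtain ⟨e, he, hle⟩ := hd (s t) t R hR
    obtain ⟨f, hf⟩ := ih (R.erase e) (by rw [Finset.card_erase_of_mem he]; omega)
    refine ⟨Function.update f e (s t), fun i => ?_⟩
    rw [← Finset.sum_erase_add _ _ he, Finset.sum_range_succ, Function.update_self]
    refine add_le_add (le_trans (le_of_eq ?_) (hf i)) ?_
    · refine Finset.sum_congr rfl fun x hx => ?_
      rw [Function.update_of_ne (Finset.ne_of_mem_erase hx)]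
    · by_cases h : s t = i
      · subst h
        simpa using hle
      · simp [h]

lemma isPartition_nonempty {k m : ℕ} (hk : 0 < k) :
    Nonempty {P : Fin k → Finset (Fin m) // IsPartition P} := by
  refine ⟨⟨fun i => if i = ⟨0, hk⟩ then Finset.univ else ∅, ?_, fun e => ⟨⟨0, hk⟩, by simp⟩⟩⟩
  intro i j hij
  by_cases h : i = ⟨0, hk⟩
  · have : j ≠ ⟨0, hk⟩ := fun h' => hij (h.trans h'.symm)
    simp [this]
  · simp [h]

lemma le_MMSc {m k : ℕ} (c : Fin m → ℝ) (hk : 0 < k) (v : ℝ)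
    (h : ∀ P : Fin k → Finset (Fin m), IsPartition P → ∀ w, (∀ j, bundleVal c (P j) ≤ w) → v ≤ w) :
    v ≤ MMSc c k := by
  have := isPartition_nonempty (m := m) hk
  refine le_ciInf fun P => h P.1 P.2 _ fun j => ?_
  exact le_ciSup (f := fun j => bundleVal c (P.1 j)) (Set.finite_range _).bddAbove j

lemma item_le_MMSc {m k : ℕ} (c : Fin m → ℝ) (hc : ∀ j, 0 ≤ c j) (hk : 0 < k) (e : Fin m) :
    c e ≤ MMSc c k := by
  refine le_MMSc c hk _ fun P hP w hw => ?_
  obtain ⟨j, hj⟩ := hP.2 e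
  exact (Finset.single_le_sum (fun x _ => hc x) hj).trans (hw j)

lemma MMSc_nonneg {m k : ℕ} (c : Fin m → ℝ) (hc : ∀ j, 0 ≤ c j) (hk : 0 < k) :
    0 ≤ MMSc c k :=
  le_MMSc c hk _ fun _ _ _ hw => (Finset.sum_nonneg fun x _ => hc x).trans (hw ⟨0, hk⟩)

lemma sum_le_mul_MMSc {m k : ℕ} (c : Fin m → ℝ) (hk : 0 < k) :
    ∑ j, c j ≤ k * MMSc c k := by
  have hk' : (0 : ℝ) < k := by exact_mod_cast hk
  rw [← div_le_iff₀' hk']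
  refine le_MMSc c hk _ fun P hP w hw => ?_
  rw [div_le_iff₀' hk']
  have hU : Finset.univ.biUnion P = Finset.univ := by
    ext e
    simpa using hP.2 e
  calc ∑ j, c j = ∑ i, ∑ j ∈ P i, c j := by
        rw [← hU, Finset.sum_biUnion fun i _ j _ hij => hP.1 i j hij]
    _ ≤ ∑ _i : Fin k, w := Finset.sum_le_sum fun i _ => hw i
    _ = k * w := by simp

/-- the share 2·MMS-bar, given by (c,b) ↦ 2·MMS(c, b̌) where
b̌ = 1/⌈1/b⌉ is the unit lower bound of b, is feasible ex-post for additive cost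
functions over chores and arbitrary responsibilities. -/
theorem two_MMSbar_feasible_chores (n m : ℕ) (hn : 2 ≤ n) (c : Fin n → Fin m → ℝ)
    (hc : ∀ i j, 0 ≤ c i j)
    (b : Fin n → ℝ) (hb : ∀ i, 0 < b i ∧ b i < 1) (hsum : ∑ i, b i = 1) :
    ∃ A : Fin n → Finset (Fin m), IsPartition A ∧
      ∀ i, bundleVal (c i) (A i) ≤ 2 * MMSc (c i) ⌈1 / b i⌉₊ := by
  choose d hanti hd0 hdsum hdmax hdpick using fun i => exists_sorted_costs (c i) (hc i)
  obtain ⟨s, hs⟩ := exists_owner_seq b (fun i => (hb i).1) hsum m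
  obtain ⟨f, hf⟩ := exists_picking c d s hdpick m Finset.univ (by simp)
  refine ⟨fun i => Finset.univ.filter (fun e => f e = i), ⟨?_, fun e => ⟨f e, by simp⟩⟩, fun i => ?_⟩
  · intro i j hij
    rw [Finset.disjoint_left]
    intro e h1 h2
    simp only [Finset.mem_filter, Finset.mem_univ, true_and] at h1 h2
    exact hij (h1.symm.trans h2)
  obtain ⟨hb0, hb1⟩ := hb i
  set k := ⌈1 / b i⌉₊ with hkdef
  have hk : 0 < k := Nat.ceil_pos.2 (by positivity)
  have hbk : b i * ((k : ℝ) - 1) ≤ 1 := by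
    have h := Nat.ceil_lt_add_one (a := 1 / b i) (by positivity)
    calc b i * ((k : ℝ) - 1) ≤ b i * (1 / b i) := by
          apply mul_le_mul_of_nonneg_left _ hb0.le
          linarith
      _ = 1 := by field_simp
  have hμ0 := MMSc_nonneg (c i) (hc i) hk
  have hmax := hdmax i _ hμ0 (item_le_MMSc (c i) (hc i) hk)
  have htot := sum_le_mul_MMSc (c i) hk
  rw [← hdsum i] at htot
  have hcost : bundleVal (c i) (Finset.univ.filter (fun e => f e = i))
      ≤ ∑ q ∈ range m, (if s q = i then (1 : ℝ) else 0) * d i q := by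
    rw [bundleVal, Finset.sum_filter]
    exact hf i
  refine hcost.trans ?_
  -- Compare the indicator of the positions of `i` with weight `1` at position `0`, `b i` elsewhere.
  have habel := sum_mul_nonpos_of_partial_sums (hanti i) (hd0 i) m
    (w := fun q => (if s q = i then (1 : ℝ) else 0) - (if q = 0 then 1 else b i)) (by
      intro p hp
      rcases p with _ | p
      · simp
      · have h := hs p (by omega) i
        rw [Finset.sum_sub_distrib, Finset.sum_range_succ' (fun q => if q = 0 then (1 : ℝ) else b i)]
        simp only [Nat.add_eq_zero_iff, one_ne_zero, and_false, if_false, if_true,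
          Finset.sum_const, Finset.card_range, nsmul_eq_mul]
        linarith)
  have hu : ∑ q ∈ range m, (if q = 0 then (1 : ℝ) else b i) * d i q
      ≤ b i * ∑ q ∈ range m, d i q + (1 - b i) * d i 0 := by
    rcases m with _ | m
    · have := hd0 i 0
      simp
      nlinarith
    · rw [Finset.sum_range_succ', Finset.sum_range_succ' (d i), mul_add, Finset.mul_sum]
      simp
      linarith
  simp only [sub_mul, Finset.sum_sub_distrib] at habel
  have h1 : b i * ∑ q ∈ range m, d i q ≤ b i * (k * MMSc (c i) k) :=
    mul_le_mul_of_nonneg_left htot hb0.le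
  have h2 : (1 - b i) * d i 0 ≤ (1 - b i) * MMSc (c i) k :=
    mul_le_mul_of_nonneg_left hmax (by linarith)
  have h3 : b i * ((k : ℝ) - 1) * MMSc (c i) k ≤ 1 * MMSc (c i) k :=
    mul_le_mul_of_nonneg_right hbk hμ0
  linarith
end
end

section
/- Fix a set of chores M = {1,…,m} and let s be any feasible ex-post share for additive cost functions on M that is non-decreasing in the responsibility (b ≤ b' implies s(c,b) ≤ s(c,b')). Then for every additive cost function c on M and every responsibility b with 0 < b < 1, it holds that s(c,b) ≥ MMS(c, b̌). That is, the share MMS-bar, defined by (c,b) ↦ MMS(c, b̌), dominates every feasible ex-post share for chores. -/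
/-!
Let `k = ⌈1/b⌉`, so that `k ≥ 2` and `1/k ≤ b`. Feasibility for `k` agents who all have cost
function `c` and responsibility `1/k` yields a partition into `k` bundles, each of cost at most
`s(c, 1/k)`. Its maximum bundle cost is an upper bound for `MMS(c, 1/k)`, and
`s(c, 1/k) ≤ s(c, b)` by monotonicity in the responsibility.
-/

open Finset

noncomputable section

/-- An ex-post share for chores is non-decreasing in the responsibility. -/
def ChoresShareMono (m : ℕ) (s : (Fin m → ℝ) → ℝ → ℝ) : Prop :=
  ∀ c : Fin m → ℝ, (∀ j, 0 ≤ c j) →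
    ∀ b b' : ℝ, 0 < b → b ≤ b' → b' < 1 → s c b ≤ s c b'

/-- An ex-post share for chores on `M = Fin m` is feasible if in every instance
(of agents with additive cost functions and responsibilities in (0,1) summing to 1)
some assignment of all chores gives every agent cost at most her share. -/
def ChoresShareFeasible (m : ℕ) (s : (Fin m → ℝ) → ℝ → ℝ) : Prop :=
  ∀ n : ℕ, 2 ≤ n → ∀ b : Fin n → ℝ, (∀ i, 0 < b i ∧ b i < 1) → (∑ i, b i = 1) →
    ∀ c : Fin n → Fin m → ℝ, (∀ i j, 0 ≤ c i j) →
      ∃ A : Fin n → Finset (Fin m), IsPartition A ∧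
        ∀ i, bundleVal (c i) (A i) ≤ s (c i) (b i)

/-- the share MMS-bar, given by (c,b) ↦ MMS(c, b̌) with b̌ = 1/⌈1/b⌉,
dominates every feasible ex-post share for additive chores: every feasible share s
that is non-decreasing in the responsibility satisfies s(c,b) ≥ MMS(c, b̌). -/
theorem MMSbar_dominates_feasible_chores (m : ℕ) (s : (Fin m → ℝ) → ℝ → ℝ)
    (hmono : ChoresShareMono m s) (hfeas : ChoresShareFeasible m s) :
    ∀ c : Fin m → ℝ, (∀ j, 0 ≤ c j) → ∀ b : ℝ, 0 < b → b < 1 →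
      MMSc c ⌈1 / b⌉₊ ≤ s c b := by
  intro c hc b hb0 hb1
  have hk2 : 2 ≤ ⌈1 / b⌉₊ := Nat.lt_ceil.mpr (by
    rw [Nat.cast_one]
    exact one_lt_one_div hb0 hb1)
  have hle : 1 / b ≤ (⌈1 / b⌉₊ : ℝ) := Nat.le_ceil _
  generalize ⌈1 / b⌉₊ = k at hk2 hle ⊢
  have hk2' : (2 : ℝ) ≤ k := by exact_mod_cast hk2
  have hk0 : (0 : ℝ) < k := by linarith
  have hpos : (0 : ℝ) < 1 / k := by positivity
  have hkb : (1 : ℝ) / k ≤ b := (one_div_le hb0 hk0).mp hle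
  -- The instance: `k` identical agents with cost `c` and equal responsibilities `1 / k`.
  obtain ⟨A, hA, hAs⟩ := hfeas k hk2 (fun _ => 1 / k) (fun _ => ⟨hpos, by linarith⟩)
    (by simp [hk0.ne']) (fun _ => c) (fun _ => hc)
  -- `k` is positive, so the supremum over bundles is not the junk value of an empty one.
  have : Nonempty (Fin k) := ⟨⟨0, by omega⟩⟩
  calc MMSc c k ≤ ⨆ j : Fin k, bundleVal c (A j) :=
        ciInf_le (Set.finite_range _).bddBelow
          (⟨A, hA⟩ : {P : Fin k → Finset (Fin m) // IsPartition P})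
    _ ≤ s c (1 / k) := ciSup_le hAs
    _ ≤ s c b := hmono c hc _ _ hpos hkb hb1
end
end

section
/- Fix a set of chores M = {1,…,m} and let s̄ be any ex-post share for additive cost functions on M (non-decreasing in the responsibility) that dominates every feasible ex-post share for additive cost functions on M, i.e., s̄(c,b) ≤ s(c,b) for every feasible share s and all (c,b). Then s̄(c,b) ≤ MMS(c, b̌) for every additive cost function c on M and every b ∈ (0,1). Together with the fact that MMS-bar dominates every feasible share, this shows that MMS-bar is the maximal ex-post share for arbitrary responsibilities that dominates every feasible ex-post share for chores. -/
/-!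
The bound at a fixed pair `(c, b)` comes from a single feasible share. Put `k = ⌈1 / b⌉` and let
`thresholdShare c b` charge `MMS(c, 1/k)` to an agent with cost function exactly `c` and
responsibility at most `b`, and the cost of all chores to every other agent. It is feasible: if
some agent is of the second kind, that agent takes everything; otherwise all `n` responsibilities
are at most `b` and sum to `1`, so `n ≥ 1 / b`, hence `n ≥ k`, and an optimal partition of the
chores into `k` bundles (padded with empty bundles) serves all agents. Its value at `(c, b)` is
`MMS(c, 1/k)`, so any share dominating all feasible shares is at most that there.
-/

open Finset

noncomputable section

lemma bundleVal_nonneg {m : ℕ} {c : Fin m → ℝ} (hc : ∀ j, 0 ≤ c j) (S : Finset (Fin m)) :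
    0 ≤ bundleVal c S :=
  Finset.sum_nonneg fun j _ => hc j

lemma bundleVal_le_univ {m : ℕ} {c : Fin m → ℝ} (hc : ∀ j, 0 ≤ c j) (S : Finset (Fin m)) :
    bundleVal c S ≤ bundleVal c Finset.univ :=
  Finset.sum_le_sum_of_subset_of_nonneg (Finset.subset_univ S) fun j _ _ => hc j

/-- Giving all chores to one agent is an assignment. -/
lemma isPartition_single {n m : ℕ} (i₀ : Fin n) :
    IsPartition (fun i : Fin n => if i = i₀ then (Finset.univ : Finset (Fin m)) else ∅) := by
  refine ⟨fun i j hij => ?_, fun e => ⟨i₀, by simp⟩⟩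
  by_cases hi : i = i₀
  · have hj : j ≠ i₀ := fun h => hij (hi.trans h.symm)
    simp [hj]
  · simp [hi]

/-- For `k > 0` the infimum defining `MMSc c k` is attained, since there are finitely many
partitions and at least one. -/
lemma exists_optimal_partition {m k : ℕ} (c : Fin m → ℝ) (hk : 0 < k) :
    ∃ P : Fin k → Finset (Fin m), IsPartition P ∧
      (⨆ j : Fin k, bundleVal c (P j)) = MMSc c k := by
  have : Nonempty {P : Fin k → Finset (Fin m) // IsPartition P} :=
    ⟨⟨_, isPartition_single ⟨0, hk⟩⟩⟩
  obtain ⟨P, hP⟩ := exists_eq_ciInf_of_finite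
    (f := fun P : {P : Fin k → Finset (Fin m) // IsPartition P} =>
      ⨆ j : Fin k, bundleVal c (P.1 j))
  exact ⟨P.1, P.2, hP⟩

lemma MMSc_le_univ {m k : ℕ} {c : Fin m → ℝ} (hc : ∀ j, 0 ≤ c j) (hk : 0 < k) :
    MMSc c k ≤ bundleVal c Finset.univ := by
  obtain ⟨P, -, hP⟩ := exists_optimal_partition c hk
  have : Nonempty (Fin k) := ⟨⟨0, hk⟩⟩
  rw [← hP]
  exact ciSup_le fun j => bundleVal_le_univ hc _

/-- With at least `k > 0` agents, the chores can be assigned so that every bundle costs at most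
`MMSc c k`. -/
lemma exists_partition_le_MMSc {m k n : ℕ} {c : Fin m → ℝ} (hc : ∀ j, 0 ≤ c j) (hk : 0 < k)
    (hkn : k ≤ n) :
    ∃ A : Fin n → Finset (Fin m), IsPartition A ∧ ∀ i, bundleVal c (A i) ≤ MMSc c k := by
  obtain ⟨P, hPart, hP⟩ := exists_optimal_partition c hk
  have hle : ∀ j, bundleVal c (P j) ≤ MMSc c k := fun j => by
    rw [← hP]
    exact le_ciSup (f := fun j => bundleVal c (P j)) (Set.finite_range _).bddAbove j
  refine ⟨fun i => if h : i.1 < k then P ⟨i.1, h⟩ else ∅, ⟨fun i j hij => ?_, fun e => ?_⟩,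
    fun i => ?_⟩
  · by_cases hi : i.1 < k <;> by_cases hj : j.1 < k <;> simp only [hi, hj, dite_true, dite_false,
      Finset.disjoint_empty_left, Finset.disjoint_empty_right]
    exact hPart.1 _ _ fun h => hij (Fin.ext (by simpa using h))
  · obtain ⟨j, hj⟩ := hPart.2 e
    exact ⟨⟨j.1, j.2.trans_le hkn⟩, by simpa using hj⟩
  · by_cases hi : i.1 < k
    · simpa [hi] using hle ⟨i.1, hi⟩
    · have h0 := (bundleVal_nonneg hc (P ⟨0, hk⟩)).trans (hle _)
      simpa [hi, bundleVal] using h0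

open Classical in
/-- The share that charges `MMS(c, 1/⌈1/b⌉)` to agents with cost function `c` and responsibility
at most `b`, and the cost of all chores to everyone else. -/
def thresholdShare {m : ℕ} (c : Fin m → ℝ) (b : ℝ) (c' : Fin m → ℝ) (b' : ℝ) : ℝ :=
  if c' = c ∧ b' ≤ b then MMSc c ⌈1 / b⌉₊ else bundleVal c' Finset.univ

lemma thresholdShare_mono {m : ℕ} {c : Fin m → ℝ} {b : ℝ} (hc : ∀ j, 0 ≤ c j)
    (hk : 0 < ⌈1 / b⌉₊) : ChoresShareMono m (thresholdShare c b) := by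
  intro c' _ b₁ b₂ _ h12 _
  unfold thresholdShare
  by_cases h2 : c' = c ∧ b₂ ≤ b
  · rw [if_pos h2, if_pos ⟨h2.1, h12.trans h2.2⟩]
  · rw [if_neg h2]
    split_ifs with h1
    · rw [h1.1]
      exact MMSc_le_univ hc hk
    · exact le_rfl

lemma thresholdShare_feasible {m : ℕ} {c : Fin m → ℝ} {b : ℝ} (hc : ∀ j, 0 ≤ c j) (hb : 0 < b)
    (hk : 0 < ⌈1 / b⌉₊) : ChoresShareFeasible m (thresholdShare c b) := by
  intro n _ β _ hsum γ hγ
  by_cases hall : ∀ i, γ i = c ∧ β i ≤ b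
  · have hn : ⌈1 / b⌉₊ ≤ n := by
      rw [Nat.ceil_le, div_le_iff₀ hb, ← hsum]
      calc ∑ i, β i ≤ ∑ _i : Fin n, b := Finset.sum_le_sum fun i _ => (hall i).2
        _ = n * b := by simp
    obtain ⟨A, hA, hle⟩ := exists_partition_le_MMSc hc hk hn
    refine ⟨A, hA, fun i => ?_⟩
    rw [thresholdShare, if_pos (hall i), (hall i).1]
    exact hle i
  · obtain ⟨i₀, hi₀⟩ := not_forall.mp hall
    refine ⟨_, isPartition_single i₀, fun i => ?_⟩
    unfold thresholdShare
    by_cases hi : i = i₀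
    · subst hi
      rw [if_neg hi₀, if_pos rfl]
    · rw [if_neg hi]
      split_ifs with h
      · -- The optimal partition has a bundle of nonnegative cost, so the MMS is nonnegative.
        obtain ⟨A, -, hle⟩ := exists_partition_le_MMSc hc hk le_rfl
        have h0 := (bundleVal_nonneg hc (A ⟨0, hk⟩)).trans (hle _)
        simpa [bundleVal] using h0
      · simpa [bundleVal] using bundleVal_nonneg (hγ i) Finset.univ

/-- MMS-bar is the maximal share dominating every feasible ex-post share
for chores: if s̄ (an ex-post share, non-decreasing in the responsibility) dominates
every feasible ex-post share, i.e. s̄(c,b) ≤ s(c,b) for every feasible share s,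
then s̄(c,b) ≤ MMS(c, b̌) for every additive cost function c and every b ∈ (0,1),
where b̌ = 1/⌈1/b⌉. -/
theorem MMSbar_maximal_dominating_chores (m : ℕ) (sb : (Fin m → ℝ) → ℝ → ℝ)
    (hsbmono : ChoresShareMono m sb)
    (hdom : ∀ s : (Fin m → ℝ) → ℝ → ℝ, ChoresShareMono m s → ChoresShareFeasible m s →
      ∀ c : Fin m → ℝ, (∀ j, 0 ≤ c j) → ∀ b : ℝ, 0 < b → b < 1 → sb c b ≤ s c b) :
    ∀ c : Fin m → ℝ, (∀ j, 0 ≤ c j) → ∀ b : ℝ, 0 < b → b < 1 →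
      sb c b ≤ MMSc c ⌈1 / b⌉₊ := by
  intro c hc b hb hb1
  have hk : 0 < ⌈1 / b⌉₊ := Nat.ceil_pos.mpr (by positivity)
  have h := hdom (thresholdShare c b) (thresholdShare_mono hc hk)
    (thresholdShare_feasible hc hb hk) c hc b hb hb1
  simpa [thresholdShare] using h
end
end
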